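/- arXiv:2010.01882 — 7 statements merged into one kernel-verified Lean document; each statement's English description precedes it below -/
import Mathlib

section
/- Two 2-card hands {x, y} and {x', y'} of the SET deck are isomorphic if and only if the number of attributes in which x and y agree equals the number of attributes in which x' and y' agree. -/
/-- A card of the SET deck: four attributes, each with three values. -/
abbrev Card := Fin 4 → Fin 3

/-- The deck map induced by a permutation `ψ` of attributes and a family `θ` of value
permutations: it sends a card `x` to the card `y` with `y (ψ a) = θ a (x a)` for all `a`. -/
def deckMap (ψ : Equiv.Perm (Fin 4)) (θ : Fin 4 → Equiv.Perm (Fin 3)) (x : Card) : Card :=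
  fun b => θ (ψ.symm b) (x (ψ.symm b))

/-- Two hands are isomorphic if some induced deck map restricts to a bijection
of one onto the other. -/
def Isomorphic (H H' : Finset Card) : Prop :=
  ∃ (ψ : Equiv.Perm (Fin 4)) (θ : Fin 4 → Equiv.Perm (Fin 3)),
    H.image (deckMap ψ θ) = H'

/-- The number of attributes in which two cards agree. -/
def agreeCount (x y : Card) : ℕ :=
  (Finset.univ.filter fun a : Fin 4 => x a = y a).card

/-!
An induced deck map carries `x, y` to `x', y'` in this order exactly when, at every attribute `a`,
some permutation of the values sends `x a, y a` to `x' (ψ a), y' (ψ a)`. Permutations act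
doubly transitively, so such a permutation exists if and only if both pairs are equal or both are
distinct. Hence all that matters is whether some `ψ` matches up the two agreement sets, which is
a question of cardinality. The agreement count is symmetric, so the order of the two cards is
irrelevant.
-/

open scoped Finset

theorem exists_perm_apply_eq_and_apply_eq_iff {α : Type*} {a b c d : α} :
    (∃ σ : Equiv.Perm α, σ a = c ∧ σ b = d) ↔ (a = b ↔ c = d) := by
  constructor
  · rintro ⟨σ, rfl, rfl⟩
    exact σ.apply_eq_iff_eq.symm
  · intro h
    obtain rfl | hab := eq_or_ne a b
    · obtain rfl : c = d := h.mp rfl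
      obtain ⟨σ, hσ⟩ := MulAction.exists_smul_eq (Equiv.Perm α) a c
      exact ⟨σ, hσ, hσ⟩
    · exact MulAction.is_two_pretransitive_iff.mp
        (Equiv.Perm.isMultiplyPretransitive α 2) hab (mt h.mpr hab)

/-- The map on functions induced by a permutation `ψ` of the arguments and a family `θ` of
permutations of the values: `deckMap` for arbitrary types of attributes and values. -/
def inducedMap {ι α : Type*} (ψ : Equiv.Perm ι) (θ : ι → Equiv.Perm α) (x : ι → α) : ι → α :=
  fun b => θ (ψ.symm b) (x (ψ.symm b))

theorem inducedMap_eq_iff {ι α : Type*} {ψ : Equiv.Perm ι} {θ : ι → Equiv.Perm α}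
    {x x' : ι → α} : inducedMap ψ θ x = x' ↔ ∀ a, θ a (x a) = x' (ψ a) := by
  rw [funext_iff, ← ψ.forall_congr_right]
  simp only [inducedMap, Equiv.symm_apply_apply]

section FiniteAttributes

variable {ι : Type*} [Fintype ι]

theorem exists_perm_forall_iff_apply_iff (p q : ι → Prop)
    [DecidablePred p] [DecidablePred q] :
    (∃ ψ : Equiv.Perm ι, ∀ a, p a ↔ q (ψ a)) ↔ #{a | p a} = #{a | q a} := by
  classical
  constructor
  · rintro ⟨ψ, hψ⟩
    exact Finset.card_equiv ψ (by simpa using hψ)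
  · intro h
    have e : {a // p a} ≃ {a // q a} :=
      Fintype.equivOfCardEq (by simpa only [Fintype.card_subtype] using h)
    exact ⟨e.extendSubtype, fun a =>
      ⟨e.extendSubtype_mem a, not_imp_not.mp (e.extendSubtype_not_mem a)⟩⟩

variable {α : Type*} [DecidableEq α]

theorem exists_inducedMap_eq_and_inducedMap_eq_iff (x y x' y' : ι → α) :
    (∃ (ψ : Equiv.Perm ι) (θ : ι → Equiv.Perm α),
        inducedMap ψ θ x = x' ∧ inducedMap ψ θ y = y') ↔
      #{a | x a = y a} = #{a | x' a = y' a} := by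
  rw [← exists_perm_forall_iff_apply_iff]
  refine exists_congr fun ψ => ?_
  calc (∃ θ : ι → Equiv.Perm α, inducedMap ψ θ x = x' ∧ inducedMap ψ θ y = y')
    _ ↔ ∃ θ : ι → Equiv.Perm α, ∀ a, θ a (x a) = x' (ψ a) ∧ θ a (y a) = y' (ψ a) := by
      simp only [inducedMap_eq_iff, forall_and]
    _ ↔ ∀ a, ∃ σ : Equiv.Perm α, σ (x a) = x' (ψ a) ∧ σ (y a) = y' (ψ a) :=
      (Classical.skolem (p := fun a (σ : Equiv.Perm α) =>
        σ (x a) = x' (ψ a) ∧ σ (y a) = y' (ψ a))).symm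
    _ ↔ ∀ a, x a = y a ↔ x' (ψ a) = y' (ψ a) :=
      forall_congr' fun _ => exists_perm_apply_eq_and_apply_eq_iff

theorem two_card_hands_isomorphic_iff_general (x y x' y' : ι → α) :
    (∃ (ψ : Equiv.Perm ι) (θ : ι → Equiv.Perm α),
        Finset.image (inducedMap ψ θ) {x, y} = {x', y'}) ↔
      #{a | x a = y a} = #{a | x' a = y' a} := by
  have agreement_symm : #{a | y' a = x' a} = #{a | x' a = y' a} := by simp only [eq_comm]
  simp only [← Finset.coe_inj, Finset.coe_image, Finset.coe_pair, Set.image_pair,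
    Set.pair_eq_pair_iff, exists_or, exists_inducedMap_eq_and_inducedMap_eq_iff, agreement_symm,
    or_self]

end FiniteAttributes

/-- Two 2-card hands `{x, y}` and `{x', y'}` are isomorphic if and only if the number
of attributes in which `x` and `y` agree equals the number of attributes in which
`x'` and `y'` agree. -/
theorem two_card_hands_isomorphic_iff (x y x' y' : Card) (hxy : x ≠ y) (hxy' : x' ≠ y') :
    Isomorphic {x, y} {x', y'} ↔ agreeCount x y = agreeCount x' y' :=
  two_card_hands_isomorphic_iff_general x y x' y'
end

section
/- Two three-card hands of the SET deck are isomorphic if and only if they have the same symbol. -/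
/-- The number of attributes common to all three cards. -/
def tCount (x y z : Card) : ℕ :=
  (Finset.univ.filter fun a : Fin 4 => x a = y a ∧ y a = z a).card

/-- The pair-count of the pair `(x, y)` within the triple `{x, y, z}`: the number of
attributes at which `x` and `y` agree but not all three cards agree. -/
def pairCount (x y z : Card) : ℕ :=
  (Finset.univ.filter fun a : Fin 4 => x a = y a ∧ y a ≠ z a).card

/-- The symbol of a three-card hand `{x, y, z}`: the number of all-common attributes,
together with the (unordered) multiset of the three pair-counts. -/
def symbol (x y z : Card) : ℕ × Multiset ℕ :=
  (tCount x y z, {pairCount x y z, pairCount y z x, pairCount z x y})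

/-!
Each attribute partitions the cards of an ordered hand according to their values, and two attributes
induce the same partition exactly when a permutation of the values carries one to the other. So an
ordered hand is determined up to deck maps by the multiset of its partitions. Three cards admit only
five partitions: the trivial one, the discrete one, and one for each choice of an odd card out. The
pair-counts, indexed by the card outside the pair, are the multiplicities of the last kind, and the
multiplicity of the discrete partition is recovered from the total number of attributes. Since every
permutation of the pair-counts is induced by a reordering of the cards, forgetting the order of the
hand amounts to forgetting the order of the pair-counts.
-/

section FiniteFamilies

theorem map_univ_val_eq_map_univ_val_iff {α β γ : Type*} [Fintype α] [Fintype β]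
    {f : α → γ} {g : β → γ} :
    Finset.univ.val.map f = Finset.univ.val.map g ↔ ∃ e : α ≃ β, f = g ∘ e := by
  classical
  constructor
  · intro h
    have fiberEquiv (c : γ) : Nonempty ({a // f a = c} ≃ {b // g b = c}) := by
      rw [← Fintype.card_eq, Fintype.card_subtype, Fintype.card_subtype]
      simpa only [Multiset.count_map, ← Finset.filter_val, Finset.card_val, eq_comm (a := c)]
        using congrArg (Multiset.count c) h
    let e (c : γ) := (fiberEquiv c).some
    exact ⟨Equiv.ofFiberEquiv e, funext fun a => (Equiv.ofFiberEquiv_map e a).symm⟩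
  · rintro ⟨e, rfl⟩
    rw [← Multiset.map_map, Multiset.map_univ_val_equiv]

theorem multiset_eq_of_card_eq_of_count_eq_of_ne {α : Type*} [DecidableEq α] {s t : Multiset α}
    (b : α) (hcard : s.card = t.card) (hcount : ∀ a ≠ b, s.count a = t.count a) : s = t := by
  have hfilter : s.filter (¬b = ·) = t.filter (¬b = ·) := by
    ext a
    by_cases hab : b = a
    · simp [hab]
    · simpa [hab] using hcount a (Ne.symm hab)
  have hb : s.count b = t.count b := by
    have hs := Multiset.card_eq_countP_add_countP (b = ·) s
    have ht := Multiset.card_eq_countP_add_countP (b = ·) t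
    rw [Multiset.countP_eq_card_filter (¬b = ·)] at hs ht
    rw [hfilter] at hs
    simp only [Multiset.count]
    omega
  ext a
  obtain rfl | hab := eq_or_ne a b
  · exact hb
  · exact hcount a hab

theorem range_eq_range_iff_exists_perm {J α : Type*} [Finite J] {f g : J → α}
    (hf : Function.Injective f) :
    Set.range f = Set.range g ↔ ∃ τ : Equiv.Perm J, f = g ∘ τ := by
  constructor
  · intro h
    choose τ hτ using fun j => h.subset (Set.mem_range_self j)
    have hτ_inj : Function.Injective τ := fun i j hij => hf (by rw [← hτ i, ← hτ j, hij])
    exact ⟨Equiv.ofBijective τ (Finite.injective_iff_bijective.mp hτ_inj),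
      funext fun j => (hτ j).symm⟩
  · rintro ⟨τ, rfl⟩
    exact τ.surjective.range_comp g

theorem exists_perm_apply_eq_iff_ker_eq {J κ : Type*} [Finite J] {f g : J → κ} :
    (∃ σ : Equiv.Perm κ, ∀ j, σ (f j) = g j) ↔ Setoid.ker f = Setoid.ker g := by
  constructor
  · rintro ⟨σ, hσ⟩
    ext i j
    simp only [Setoid.ker_def, ← hσ, σ.apply_eq_iff_eq]
  · intro h
    have hker (i j : J) : f i = f j ↔ g i = g j := Setoid.ext_iff.mp h i j
    let rep : Quotient (Setoid.ker f) → J := Quotient.out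
    have hf_rep : Function.Injective (f ∘ rep) := fun p q hpq => Quotient.out_equiv_out.mp hpq
    have hg_rep : Function.Injective (g ∘ rep) := fun p q hpq => hf_rep ((hker _ _).mpr hpq)
    obtain ⟨σ, hσ⟩ := Equiv.Perm.exists_extending_pair _ _ hf_rep hg_rep
    refine ⟨σ, fun j => ?_⟩
    have hj : f (rep ⟦j⟧) = f j := Setoid.ker_apply_mk_out j
    rw [← hj, ← (hker _ _).mp hj]
    exact hσ ⟦j⟧

theorem injective_vec_three {α : Type*} {x y z : α} (hxy : x ≠ y) (hxz : x ≠ z) (hyz : y ≠ z) :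
    Function.Injective ![x, y, z] := by
  simp [Function.Injective, Fin.forall_fin_succ, *, Ne.symm, eq_comm]

end FiniteFamilies

section Partitions

/-- The partition of a hand indexed by `J` in which the card `j` stands alone and all the other
cards are together. -/
def oddOneOut {J : Type*} (j : J) : Setoid J :=
  Setoid.ker (· = j)

theorem oddOneOut_rel {J : Type*} {j i k : J} : oddOneOut j i k ↔ (i = j ↔ k = j) :=
  eq_iff_iff

theorem comap_oddOneOut {J : Type*} (τ : Equiv.Perm J) (j : J) :
    (oddOneOut (τ j)).comap τ = oddOneOut j := by
  ext i k
  simp only [Setoid.comap_rel, oddOneOut_rel, τ.apply_eq_iff_eq]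

theorem ker_eq_top_iff_fin_three {κ : Type*} {f : Fin 3 → κ} :
    Setoid.ker f = ⊤ ↔ f 0 = f 1 ∧ f 1 = f 2 := by
  rw [Setoid.eq_top_iff]
  constructor
  · exact fun h => ⟨h 0 1, h 1 2⟩
  · rintro ⟨h01, h12⟩ i k
    have const : ∀ i, f i = f 2 := by
      intro i
      fin_cases i <;> simp [h01, h12]
    exact (const i).trans (const k).symm

theorem ker_eq_oddOneOut_iff_fin_three {κ : Type*} {f : Fin 3 → κ} {j : Fin 3} :
    Setoid.ker f = oddOneOut j ↔ f (j + 1) = f (j + 2) ∧ f (j + 2) ≠ f j := by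
  have exhaust : ∀ i, i = j ∨ i = j + 1 ∨ i = j + 2 := by decide +revert
  have h1 : j + 1 ≠ j := by decide +revert
  have h2 : j + 2 ≠ j := by decide +revert
  simp only [Setoid.ext_iff, Setoid.ker_def, oddOneOut_rel]
  grind

theorem setoid_fin_three_cases (r : Setoid (Fin 3)) :
    r = ⊤ ∨ r = ⊥ ∨ ∃ j, r = oddOneOut j := by
  suffices h : ∀ f : Fin 3 → Quotient r,
      Setoid.ker f = ⊤ ∨ Setoid.ker f = ⊥ ∨ ∃ j, Setoid.ker f = oddOneOut j by
    simpa only [Setoid.ker_mk_eq] using h Quotient.mk''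
  intro f
  have pair_eq : ∀ i k : Fin 3, i ≠ k →
      ∃ j, (i = j + 1 ∧ k = j + 2) ∨ (i = j + 2 ∧ k = j + 1) := by decide
  simp only [ker_eq_top_iff_fin_three, Setoid.ker_eq_bot_iff, ker_eq_oddOneOut_iff_fin_three]
  by_cases hpair : ∃ j, f (j + 1) = f (j + 2)
  · obtain ⟨j, hj⟩ := hpair
    by_cases hodd : f (j + 2) = f j
    · left
      fin_cases j <;> simp_all
    · exact Or.inr (Or.inr ⟨j, hj, hodd⟩)
  · refine Or.inr (Or.inl fun i k hik => ?_)
    by_contra hne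
    obtain ⟨j, ⟨rfl, rfl⟩ | ⟨rfl, rfl⟩⟩ := pair_eq i k hne
    · exact hpair ⟨j, hik⟩
    · exact hpair ⟨j, hik.symm⟩

end Partitions

section Decks

variable {J ι κ : Type*}

/-- The deck map induced by `ψ` and `θ` in a deck with attribute set `ι` and value set `κ`: it sends
`x` to the card `y` with `y (ψ a) = θ a (x a)`. -/
def deckEquiv (ψ : Equiv.Perm ι) (θ : ι → Equiv.Perm κ) : Equiv.Perm (ι → κ) :=
  Equiv.piCongr ψ θ

theorem deckEquiv_apply_eq_iff {ψ : Equiv.Perm ι} {θ : ι → Equiv.Perm κ} {x y : ι → κ} :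
    deckEquiv ψ θ x = y ↔ ∀ a, θ a (x a) = y (ψ a) := by
  rw [funext_iff, ← ψ.forall_congr_right]
  simp only [deckEquiv, Equiv.piCongr_apply_apply]

/-- Isomorphism of hands in a deck with attribute set `ι` and value set `κ`. -/
def IsomorphicHands (H H' : Set (ι → κ)) : Prop :=
  ∃ (ψ : Equiv.Perm ι) (θ : ι → Equiv.Perm κ), deckEquiv ψ θ '' H = H'

variable [Fintype ι]

/-- The partitions of an ordered hand by the values of the cards, one for each attribute. -/
def agreementPartitions (x : J → ι → κ) : Multiset (Setoid J) :=
  Finset.univ.val.map fun a => Setoid.ker fun j => x j a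

theorem card_agreementPartitions (x : J → ι → κ) :
    (agreementPartitions x).card = Fintype.card ι := by
  simp [agreementPartitions]

theorem agreementPartitions_comp (x : J → ι → κ) (τ : Equiv.Perm J) :
    agreementPartitions (x ∘ τ) = (agreementPartitions x).map (Setoid.comap τ) := by
  rw [agreementPartitions, agreementPartitions, Multiset.map_map]
  rfl

theorem exists_deckEquiv_apply_eq_iff [Finite J] {x x' : J → ι → κ} :
    (∃ (ψ : Equiv.Perm ι) (θ : ι → Equiv.Perm κ), ∀ j, deckEquiv ψ θ (x j) = x' j) ↔
      agreementPartitions x = agreementPartitions x' := by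
  rw [agreementPartitions, agreementPartitions, map_univ_val_eq_map_univ_val_iff]
  refine exists_congr fun ψ => ?_
  rw [funext_iff]
  simp only [deckEquiv_apply_eq_iff, Function.comp_apply, ← exists_perm_apply_eq_iff_ker_eq,
    Classical.skolem]
  exact exists_congr fun θ => forall_comm

theorem isomorphicHands_range_iff [Finite J] {x x' : J → ι → κ} (hx : Function.Injective x) :
    IsomorphicHands (Set.range x) (Set.range x') ↔
      ∃ τ : Equiv.Perm J, agreementPartitions x = agreementPartitions (x' ∘ τ) := by
  have image_eq_iff (ψ : Equiv.Perm ι) (θ : ι → Equiv.Perm κ) :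
      deckEquiv ψ θ '' Set.range x = Set.range x' ↔
        ∃ τ : Equiv.Perm J, ∀ j, deckEquiv ψ θ (x j) = (x' ∘ τ) j := by
    rw [← Set.range_comp, range_eq_range_iff_exists_perm ((deckEquiv ψ θ).injective.comp hx)]
    exact exists_congr fun τ => funext_iff
  simp only [IsomorphicHands, image_eq_iff, ← exists_deckEquiv_apply_eq_iff]
  exact ⟨fun ⟨ψ, θ, τ, h⟩ => ⟨τ, ψ, θ, h⟩, fun ⟨τ, ψ, θ, h⟩ => ⟨ψ, θ, τ, h⟩⟩

theorem count_agreementPartitions [DecidableEq (Setoid J)] (x : J → ι → κ) (r : Setoid J) :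
    (agreementPartitions x).count r = Finset.card {a | Setoid.ker (fun j => x j a) = r} := by
  simp only [agreementPartitions, Multiset.count_map, eq_comm (a := r)]
  rfl

theorem count_comap_agreementPartitions_comp [DecidableEq (Setoid J)] (x : J → ι → κ)
    (τ : Equiv.Perm J) (r : Setoid J) :
    (agreementPartitions (x ∘ τ)).count (r.comap τ) = (agreementPartitions x).count r := by
  rw [agreementPartitions_comp,
    Multiset.count_map_eq_count' _ _ (Setoid.comap_injective τ τ.surjective)]

variable [DecidableEq κ]

/-- The number of attributes common to the three cards of an ordered hand. -/
def commonCount (x : Fin 3 → ι → κ) : ℕ :=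
  Finset.card {a | x 0 a = x 1 a ∧ x 1 a = x 2 a}

/-- The pair-count of the pair of cards other than `x j`; indices are read modulo 3. -/
def oppositePairCount (x : Fin 3 → ι → κ) (j : Fin 3) : ℕ :=
  Finset.card {a | x (j + 1) a = x (j + 2) a ∧ x (j + 2) a ≠ x j a}

/-- The symbol of a three-card hand in a deck with attribute set `ι` and value set `κ`. -/
def handSymbol (x : Fin 3 → ι → κ) : ℕ × Multiset ℕ :=
  (commonCount x, Finset.univ.val.map (oppositePairCount x))

theorem commonCount_eq_count [DecidableEq (Setoid (Fin 3))] (x : Fin 3 → ι → κ) :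
    commonCount x = (agreementPartitions x).count ⊤ := by
  simp only [commonCount, count_agreementPartitions, ker_eq_top_iff_fin_three]

theorem oppositePairCount_eq_count [DecidableEq (Setoid (Fin 3))] (x : Fin 3 → ι → κ)
    (j : Fin 3) : oppositePairCount x j = (agreementPartitions x).count (oddOneOut j) := by
  simp only [oppositePairCount, count_agreementPartitions, ker_eq_oddOneOut_iff_fin_three]

theorem agreementPartitions_eq_iff_fin_three {x x' : Fin 3 → ι → κ} :
    agreementPartitions x = agreementPartitions x' ↔
      commonCount x = commonCount x' ∧ oppositePairCount x = oppositePairCount x' := by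
  classical
  simp only [funext_iff, commonCount_eq_count, oppositePairCount_eq_count]
  constructor
  · intro h
    simp [h]
  · rintro ⟨htop, hodd⟩
    have hcard : (agreementPartitions x).card = (agreementPartitions x').card := by
      rw [card_agreementPartitions, card_agreementPartitions]
    refine multiset_eq_of_card_eq_of_count_eq_of_ne ⊥ hcard fun r hr => ?_
    obtain rfl | rfl | ⟨j, rfl⟩ := setoid_fin_three_cases r
    · exact htop
    · exact absurd rfl hr
    · exact hodd j

theorem commonCount_comp (x : Fin 3 → ι → κ) (τ : Equiv.Perm (Fin 3)) :
    commonCount (x ∘ τ) = commonCount x := by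
  classical
  rw [commonCount_eq_count, commonCount_eq_count]
  exact count_comap_agreementPartitions_comp x τ ⊤

theorem oppositePairCount_comp (x : Fin 3 → ι → κ) (τ : Equiv.Perm (Fin 3)) :
    oppositePairCount (x ∘ τ) = oppositePairCount x ∘ τ := by
  classical
  ext j
  rw [Function.comp_apply, oppositePairCount_eq_count, oppositePairCount_eq_count,
    ← comap_oddOneOut τ, count_comap_agreementPartitions_comp]

theorem three_card_hands_isomorphic_iff_symbol_eq_general {x x' : Fin 3 → ι → κ}
    (hx : Function.Injective x) :
    IsomorphicHands (Set.range x) (Set.range x') ↔ handSymbol x = handSymbol x' := by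
  simp only [isomorphicHands_range_iff hx, agreementPartitions_eq_iff_fin_three, commonCount_comp,
    oppositePairCount_comp, exists_and_left, handSymbol, Prod.mk.injEq,
    map_univ_val_eq_map_univ_val_iff]

end Decks

section SetDeck

theorem deckMap_eq_deckEquiv (ψ : Equiv.Perm (Fin 4)) (θ : Fin 4 → Equiv.Perm (Fin 3)) :
    deckMap ψ θ = deckEquiv ψ θ :=
  funext fun x => (deckEquiv_apply_eq_iff.mpr fun a => by simp [deckMap]).symm

theorem isomorphic_iff_isomorphicHands_range (x y z x' y' z' : Card) :
    Isomorphic {x, y, z} {x', y', z'} ↔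
      IsomorphicHands (Set.range ![x, y, z]) (Set.range ![x', y', z']) := by
  simp only [Isomorphic, IsomorphicHands, deckMap_eq_deckEquiv, ← Finset.coe_inj,
    Finset.coe_image, Finset.coe_insert, Finset.coe_singleton, Matrix.range_cons,
    Matrix.range_empty, Set.singleton_union, Set.union_empty]

theorem symbol_eq_handSymbol (x y z : Card) : symbol x y z = handSymbol ![x, y, z] := by
  have pairs : Finset.univ.val.map (oppositePairCount ![x, y, z]) =
      {pairCount y z x, pairCount z x y, pairCount x y z} := rfl
  rw [symbol, handSymbol, pairs]
  refine congrArg (Prod.mk _) ?_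
  simp only [Multiset.insert_eq_cons, ← Multiset.singleton_add]
  abel

end SetDeck

/-- Two three-card hands are isomorphic if and only if they have the same symbol. -/
theorem three_card_hands_isomorphic_iff_symbol_eq
    (x y z x' y' z' : Card)
    (hxy : x ≠ y) (hxz : x ≠ z) (hyz : y ≠ z)
    (hxy' : x' ≠ y') (hxz' : x' ≠ z') (hyz' : y' ≠ z') :
    Isomorphic {x, y, z} {x', y', z'} ↔ symbol x y z = symbol x' y' z' := by
  rw [isomorphic_iff_isomorphicHands_range, symbol_eq_handSymbol, symbol_eq_handSymbol]
  exact three_card_hands_isomorphic_iff_symbol_eq_general (injective_vec_three hxy hxz hyz)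
end

section
/- A pair (t, M), with t a natural number and M = {p₁, p₂, p₃} a multiset of three natural numbers, is the symbol of some three-card hand of the SET deck if and only if: t ≤ 3, each pᵢ ≤ 3, each pᵢ + t ≤ 3, and t + p₁ + p₂ + p₃ ≤ 4. -/
/-!
At each attribute three cards either all agree, or exactly one of the three pairs agrees, or the
cards are pairwise different. The first four cases are counted by `t, p₁, p₂, p₃`, whence
`t + p₁ + p₂ + p₃ ≤ n`; and a pair of cards agrees at exactly `t + pᵢ` of the `n` attributes, so
its cards are distinct if and only if `pᵢ + t < n`. Conversely, cut the attributes into blocks of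
sizes `t, p₁, p₂, p₃` and a remainder, and prescribe one of the five cases on each block.
-/

section Counts

variable {ι α : Type*} [Fintype ι] [DecidableEq α]

/-- The number of attributes at which three cards all agree: `tCount` for an arbitrary finite type
`ι` of attributes and an arbitrary type `α` of values. -/
def allAgreeCount (x y z : ι → α) : ℕ :=
  (Finset.univ.filter fun i => x i = y i ∧ y i = z i).card

/-- The number of attributes at which `x` and `y` agree but `z` does not: `pairCount` for arbitrary
attributes and values. -/
def pairAgreeCount (x y z : ι → α) : ℕ :=
  (Finset.univ.filter fun i => x i = y i ∧ y i ≠ z i).card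

/-- The symbol of a triple of cards: `symbol` for arbitrary attributes and values. -/
def agreementSymbol (x y z : ι → α) : ℕ × Multiset ℕ :=
  (allAgreeCount x y z, {pairAgreeCount x y z, pairAgreeCount y z x, pairAgreeCount z x y})

theorem allAgreeCount_rotate (x y z : ι → α) : allAgreeCount y z x = allAgreeCount x y z := by
  unfold allAgreeCount
  congr 1
  ext i
  simp only [Finset.mem_filter_univ]
  exact ⟨fun ⟨hyz, hzx⟩ => ⟨(hyz.trans hzx).symm, hyz⟩,
    fun ⟨hxy, hyz⟩ => ⟨hyz, (hxy.trans hyz).symm⟩⟩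

theorem pairAgreeCount_add_allAgreeCount_add_hammingDist (x y z : ι → α) :
    pairAgreeCount x y z + allAgreeCount x y z + hammingDist x y = Fintype.card ι := by
  have agree_eq : allAgreeCount x y z + pairAgreeCount x y z
      = (Finset.univ.filter fun i => x i = y i).card := by
    simp only [allAgreeCount, pairAgreeCount, ← Finset.filter_filter, ne_eq]
    exact Finset.card_filter_add_card_filter_not _
  rw [add_comm (pairAgreeCount x y z), agree_eq]
  exact Finset.card_filter_add_card_filter_not _

theorem ne_iff_pairAgreeCount_add_allAgreeCount_lt (x y z : ι → α) :
    x ≠ y ↔ pairAgreeCount x y z + allAgreeCount x y z < Fintype.card ι := by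
  rw [← pairAgreeCount_add_allAgreeCount_add_hammingDist x y z, ← hammingDist_pos]
  exact Nat.lt_add_right_iff_pos.symm

theorem pairwise_ne_iff_forall_mem_agreementSymbol (x y z : ι → α) :
    (x ≠ y ∧ x ≠ z ∧ y ≠ z) ↔
      ∀ p ∈ (agreementSymbol x y z).2, p + (agreementSymbol x y z).1 < Fintype.card ι := by
  rw [ne_iff_pairAgreeCount_add_allAgreeCount_lt x y z, ne_comm (a := x) (b := z),
    ne_iff_pairAgreeCount_add_allAgreeCount_lt z x y,
    ne_iff_pairAgreeCount_add_allAgreeCount_lt y z x,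
    ← allAgreeCount_rotate z x y, allAgreeCount_rotate x y z]
  simp [agreementSymbol, and_comm]

theorem agreementSymbol_fst_add_sum_snd_le_card (x y z : ι → α) :
    (agreementSymbol x y z).1 + (agreementSymbol x y z).2.sum ≤ Fintype.card ι := by
  simp only [agreementSymbol, allAgreeCount, pairAgreeCount, Multiset.insert_eq_cons,
    Multiset.sum_cons, Multiset.sum_singleton, Finset.card_filter, ← Finset.sum_add_distrib]
  rw [← Finset.card_univ, Finset.card_eq_sum_ones]
  refine Finset.sum_le_sum fun i _ => ?_
  grind

end Counts

section Realization

variable {ι : Type*} [Fintype ι]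

theorem exists_forall_card_fiber_eq {κ : Type*} [Fintype κ] [DecidableEq κ] (m : κ → ℕ)
    (hm : ∑ k, m k = Fintype.card ι) :
    ∃ σ : ι → κ, ∀ k, (Finset.univ.filter fun i => σ i = k).card = m k := by
  have card_eq : Fintype.card ι = Fintype.card (Σ k, Fin (m k)) := by simp [hm]
  let e : ι ≃ Σ k, Fin (m k) := Fintype.equivOfCardEq card_eq
  refine ⟨fun i => (e i).1, fun k => ?_⟩
  rw [← Fintype.card_subtype]
  calc Fintype.card {i // (e i).1 = k}
      = Fintype.card {s : Σ k, Fin (m k) // s.1 = k} :=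
        Fintype.card_congr (e.subtypeEquiv fun _ => Iff.rfl)
    _ = Fintype.card (Fin (m k)) := Fintype.card_congr (Equiv.sigmaSubtype k)
    _ = m k := Fintype.card_fin _

variable {α : Type*} [DecidableEq α]

theorem exists_agreementSymbol_eq (v : Fin 3 ↪ α) {t p₁ p₂ p₃ : ℕ}
    (h : t + p₁ + p₂ + p₃ ≤ Fintype.card ι) :
    ∃ x y z : ι → α, agreementSymbol x y z = (t, {p₁, p₂, p₃}) := by
  obtain ⟨s, hs⟩ := Nat.exists_eq_add_of_le h
  obtain ⟨σ, hσ⟩ := exists_forall_card_fiber_eq (ι := ι) ![t, p₁, p₂, p₃, s]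
    (by simp [Fin.sum_univ_succ, hs, add_assoc])
  -- The columns are the blocks: all cards agree on block `0`, one card is odd on blocks `1, 2, 3`,
  -- and the cards are pairwise different on block `4`.
  let X : Fin 5 → Fin 3 := ![0, 0, 1, 0, 0]
  let Y : Fin 5 → Fin 3 := ![0, 0, 0, 1, 1]
  let Z : Fin 5 → Fin 3 := ![0, 1, 0, 0, 2]
  have all_iff : ∀ k, (X k = Y k ∧ Y k = Z k) ↔ k = 0 := by decide
  have xy_iff : ∀ k, (X k = Y k ∧ Y k ≠ Z k) ↔ k = 1 := by decide
  have yz_iff : ∀ k, (Y k = Z k ∧ Z k ≠ X k) ↔ k = 2 := by decide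
  have zx_iff : ∀ k, (Z k = X k ∧ X k ≠ Y k) ↔ k = 3 := by decide
  refine ⟨fun i => v (X (σ i)), fun i => v (Y (σ i)), fun i => v (Z (σ i)), ?_⟩
  simp only [agreementSymbol, allAgreeCount, pairAgreeCount, v.injective.eq_iff, v.injective.ne_iff,
    all_iff, xy_iff, yz_iff, zx_iff, hσ]
  rfl

end Realization

theorem symbol_realizable_iff_general {ι α : Type*} [Fintype ι] [DecidableEq α] (v : Fin 3 ↪ α)
    (t p₁ p₂ p₃ : ℕ) :
    (∃ x y z : ι → α, x ≠ y ∧ x ≠ z ∧ y ≠ z ∧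
        agreementSymbol x y z = (t, ({p₁, p₂, p₃} : Multiset ℕ))) ↔
      (p₁ + t < Fintype.card ι ∧ p₂ + t < Fintype.card ι ∧ p₃ + t < Fintype.card ι) ∧
        t + p₁ + p₂ + p₃ ≤ Fintype.card ι := by
  constructor
  · rintro ⟨x, y, z, hxy, hxz, hyz, hsymbol⟩
    have hlt := (pairwise_ne_iff_forall_mem_agreementSymbol x y z).1 ⟨hxy, hxz, hyz⟩
    have hle := agreementSymbol_fst_add_sum_snd_le_card x y z
    rw [hsymbol] at hlt hle
    simpa [add_assoc] using And.intro hlt hle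
  · rintro ⟨hlt, hle⟩
    obtain ⟨x, y, z, hsymbol⟩ := exists_agreementSymbol_eq (ι := ι) v hle
    obtain ⟨hxy, hxz, hyz⟩ := (pairwise_ne_iff_forall_mem_agreementSymbol x y z).2
      (by simpa [hsymbol] using hlt)
    exact ⟨x, y, z, hxy, hxz, hyz, hsymbol⟩

theorem symbol_eq_agreementSymbol (x y z : Card) : symbol x y z = agreementSymbol x y z :=
  rfl

/-- A tuple `(t, {p₁, p₂, p₃})` is the symbol of a three-card hand if and only if
`t ≤ 3`, each `pᵢ ≤ 3`, each `pᵢ + t ≤ 3`, and `t + p₁ + p₂ + p₃ ≤ 4`. -/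
theorem symbol_realizable_iff (t p₁ p₂ p₃ : ℕ) :
    (∃ x y z : Card, x ≠ y ∧ x ≠ z ∧ y ≠ z ∧
        symbol x y z = (t, ({p₁, p₂, p₃} : Multiset ℕ))) ↔
      (t ≤ 3 ∧ (p₁ ≤ 3 ∧ p₂ ≤ 3 ∧ p₃ ≤ 3) ∧
        (p₁ + t ≤ 3 ∧ p₂ + t ≤ 3 ∧ p₃ + t ≤ 3) ∧
        t + p₁ + p₂ + p₃ ≤ 4) := by
  simp only [symbol_eq_agreementSymbol,
    symbol_realizable_iff_general (Function.Embedding.refl (Fin 3)), Fintype.card_fin]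
  omega
end

section
/- The 1080 Sets in the SET deck split by their number of all-common attributes as follows: exactly 216 Sets have 0 attributes common to all three cards, exactly 432 have 1, exactly 324 have 2, and exactly 108 have 3. -/
/-- A finite set of cards is a `Set` if it has three cards and, in each attribute,
the values are either all equal or pairwise distinct. -/
def IsSet (s : Finset Card) : Prop :=
  s.card = 3 ∧ ∀ a : Fin 4,
    (∀ x ∈ s, ∀ y ∈ s, x a = y a) ∨ (∀ x ∈ s, ∀ y ∈ s, x ≠ y → x a ≠ y a)

instance : DecidablePred IsSet := fun s => by
  have : ∀ a : Fin 4,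
      Decidable ((∀ x ∈ s, ∀ y ∈ s, x a = y a) ∨ ∀ x ∈ s, ∀ y ∈ s, x ≠ y → x a ≠ y a) :=
    fun _ => instDecidableOr
  unfold IsSet
  infer_instance

/-- The number of attributes common to all cards of a hand. -/
def allCommonCount (s : Finset Card) : ℕ :=
  (Finset.univ.filter fun a : Fin 4 => ∀ x ∈ s, ∀ y ∈ s, x a = y a).card

/-!
A `Set` whose three cards are listed in order is a table of values with one column per attribute.
Each column is either constant (3 choices) or injective (3! choices), and the columns are chosen
independently, so `4.choose k * 3 ^ k * 3! ^ (4 - k)` tables have exactly `k` constant columns.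
For `k < 4` some column is injective, so the three listed cards are distinct and every `Set` arises
from exactly 3! tables. The same count works for any number of attributes, any number of values, and
`Set`s of any size at least two.
-/

open Finset
open scoped Nat

section Counting

variable {ι κ α V : Type*} [Fintype κ]

lemma card_embedding_univ_map_eq [Fintype α] [DecidableEq α] {s : Finset α}
    (hs : #s = Fintype.card κ) :
    #{f : κ ↪ α | univ.map f = s} = (Fintype.card κ)! := by
  have card_embedding : Fintype.card (κ ↪ s) = (Fintype.card κ)! := by
    rw [Fintype.card_embedding_eq, Fintype.card_coe, hs, Nat.descFactorial_self]
  rw [← card_embedding, ← card_univ]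
  refine (card_bij (fun g _ => g.trans (.subtype (· ∈ s))) ?_ ?_ ?_).symm
  · intro g _
    refine mem_filter.mpr ⟨mem_univ _, eq_of_subset_of_card_le ?_ ?_⟩
    · exact map_subset_iff_subset_preimage.mpr fun i _ => by simp
    · rw [card_map, card_univ, hs]
  · intro g _ g' _ h
    ext i
    exact DFunLike.congr_fun h i
  · intro f hf
    obtain rfl := (mem_filter.mp hf).2
    exact ⟨f.codRestrict _ fun i => mem_map_of_mem f (mem_univ i), mem_univ _, rfl⟩

lemma card_filter_embedding_univ_map [Fintype α] (P : Finset α → Prop) [DecidablePred P] :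
    #{f : κ ↪ α | P (univ.map f)} =
      #{s ∈ powersetCard (Fintype.card κ) (univ : Finset α) | P s} * (Fintype.card κ)! := by
  classical
  rw [card_eq_sum_card_fiberwise (f := fun f => univ.map f)
    (t := {s ∈ powersetCard (Fintype.card κ) univ | P s})]
  · refine sum_const_nat fun s hs => ?_
    obtain ⟨hs, hPs⟩ := mem_filter.mp hs
    rw [← card_embedding_univ_map_eq (mem_powersetCard_univ.mp hs), filter_filter]
    congr! 3 with f
    exact and_iff_right_of_imp fun h => h ▸ hPs
  · intro f hf
    simpa using hf

lemma card_piFinset_ite [Fintype ι] [DecidableEq ι] (A B : Finset α) (T : Finset ι) :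
    #(Fintype.piFinset fun i => if i ∈ T then A else B) =
      #A ^ #T * #B ^ (Fintype.card ι - #T) := by
  simp only [Fintype.card_piFinset, apply_ite card, prod_ite, prod_const, filter_univ_mem,
    filter_notMem_eq_sdiff, card_univ_sdiff]

lemma filter_piFinset_union_eq [Fintype ι] [DecidableEq ι] [DecidableEq α] {A B : Finset α}
    (hAB : Disjoint A B) (T : Finset ι) :
    {g ∈ Fintype.piFinset fun _ : ι => A ∪ B | ({i | g i ∈ A} : Finset ι) = T} =
      Fintype.piFinset fun i => if i ∈ T then A else B := by
  ext g
  simp only [mem_filter, Fintype.mem_piFinset, mem_union, Finset.ext_iff, mem_univ, true_and,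
    ← forall_and]
  refine forall_congr' fun i => ?_
  have notMem_right : g i ∈ A → g i ∉ B := fun hA => Finset.disjoint_left.mp hAB hA
  split_ifs <;> tauto

lemma card_filter_piFinset_union [Fintype ι] [DecidableEq ι] [DecidableEq α] {A B : Finset α}
    (hAB : Disjoint A B) (k : ℕ) :
    #{g ∈ Fintype.piFinset fun _ : ι => A ∪ B | #{i | g i ∈ A} = k} =
      (Fintype.card ι).choose k * (#A ^ k * #B ^ (Fintype.card ι - k)) := by
  rw [card_eq_sum_card_fiberwise (f := fun g => ({i | g i ∈ A} : Finset ι))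
    (t := powersetCard k univ), sum_const_nat, card_powersetCard, card_univ]
  · intro T hT
    obtain rfl := mem_powersetCard_univ.mp hT
    rw [← card_piFinset_ite, ← filter_piFinset_union_eq hAB, filter_filter]
    congr! 3 with g
    exact and_iff_right_of_imp (congrArg card)
  · intro g hg
    simpa using (mem_filter.mp hg).2

variable (κ V) [DecidableEq κ] [Fintype V] [DecidableEq V]

/-- The constant functions `κ → V`: the columns of an attribute common to all cards. -/
def constantColumns : Finset (κ → V) := {c | ∀ i j, c i = c j}

/-- The injective functions `κ → V`: the columns of an attribute distinguishing all cards. -/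
def injectiveColumns : Finset (κ → V) := {c | Function.Injective c}

variable {κ V}

lemma mem_constantColumns {c : κ → V} : c ∈ constantColumns κ V ↔ ∀ i j, c i = c j := by
  simp [constantColumns]

lemma mem_injectiveColumns {c : κ → V} : c ∈ injectiveColumns κ V ↔ Function.Injective c := by
  simp [injectiveColumns]

variable (κ V)

lemma card_constantColumns [Nonempty κ] : #(constantColumns κ V) = Fintype.card V := by
  refine (card_bij (fun v _ => Function.const κ v) ?_ ?_ ?_).symm
  · simp [mem_constantColumns]
  · simp
  · intro c hc
    have i₀ := Classical.arbitrary κ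
    exact ⟨c i₀, mem_univ _, funext fun i => mem_constantColumns.mp hc i₀ i⟩

lemma card_injectiveColumns :
    #(injectiveColumns κ V) = (Fintype.card V).descFactorial (Fintype.card κ) := by
  rw [injectiveColumns, ← Fintype.card_embedding_eq, ← Fintype.card_subtype]
  exact Fintype.card_congr (Equiv.subtypeInjectiveEquivEmbedding κ V)

lemma disjoint_constantColumns_injectiveColumns [Nontrivial κ] :
    Disjoint (constantColumns κ V) (injectiveColumns κ V) := by
  refine Finset.disjoint_left.mpr fun c hconst hinj => ?_
  obtain ⟨i, j, hij⟩ := exists_pair_ne κ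
  exact hij (mem_injectiveColumns.mp hinj (mem_constantColumns.mp hconst i j))

end Counting

section GeneralizedSets

variable {ι κ V : Type*}

/-- The attribute `a` takes the same value on all cards of `s`. -/
def IsCommonAttribute (s : Finset (ι → V)) (a : ι) : Prop :=
  ∀ x ∈ s, ∀ y ∈ s, x a = y a

/-- The attribute `a` takes pairwise distinct values on the cards of `s`. -/
def IsRainbowAttribute (s : Finset (ι → V)) (a : ι) : Prop :=
  ∀ x ∈ s, ∀ y ∈ s, x ≠ y → x a ≠ y a

/-- The `Set` condition for a hand `s` of any size, from a deck with attributes `ι` and values `V`.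
The number of cards is not part of the condition. -/
def IsGeneralizedSet (s : Finset (ι → V)) : Prop :=
  ∀ a, IsCommonAttribute s a ∨ IsRainbowAttribute s a

section Decidability

variable [DecidableEq V]

instance (s : Finset (ι → V)) (a : ι) : Decidable (IsCommonAttribute s a) :=
  inferInstanceAs (Decidable (∀ x ∈ s, ∀ y ∈ s, x a = y a))

instance [Fintype ι] (s : Finset (ι → V)) (a : ι) : Decidable (IsRainbowAttribute s a) :=
  inferInstanceAs (Decidable (∀ x ∈ s, ∀ y ∈ s, x ≠ y → x a ≠ y a))

instance [Fintype ι] (s : Finset (ι → V)) : Decidable (IsGeneralizedSet s) :=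
  inferInstanceAs (Decidable (∀ a, IsCommonAttribute s a ∨ IsRainbowAttribute s a))

end Decidability

variable [Fintype κ] [DecidableEq κ] [Fintype V] [DecidableEq V]

lemma isCommonAttribute_univ_map (f : κ ↪ (ι → V)) (a : ι) :
    IsCommonAttribute (univ.map f) a ↔ (f · a) ∈ constantColumns κ V := by
  simp [IsCommonAttribute, mem_constantColumns]

lemma isRainbowAttribute_univ_map (f : κ ↪ (ι → V)) (a : ι) :
    IsRainbowAttribute (univ.map f) a ↔ (f · a) ∈ injectiveColumns κ V := by
  simp [IsRainbowAttribute, mem_injectiveColumns, Function.Injective, not_imp_not]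

lemma isGeneralizedSet_univ_map (f : κ ↪ (ι → V)) :
    IsGeneralizedSet (univ.map f) ↔ ∀ a, (f · a) ∈ constantColumns κ V ∪ injectiveColumns κ V := by
  simp only [IsGeneralizedSet, isCommonAttribute_univ_map, isRainbowAttribute_univ_map, mem_union]

variable [Fintype ι]

lemma injective_swap_of_card_constantColumns_lt {g : ι → κ → V}
    (hg : ∀ a, g a ∈ constantColumns κ V ∪ injectiveColumns κ V)
    (hlt : #{a | g a ∈ constantColumns κ V} < Fintype.card ι) :
    Function.Injective (Function.swap g) := by
  obtain ⟨a, ha⟩ : ∃ a, g a ∉ constantColumns κ V := by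
    by_contra! hall
    simp [hall] at hlt
  have hinj : Function.Injective (g a) :=
    mem_injectiveColumns.mp ((mem_union.mp (hg a)).resolve_left ha)
  exact fun i j hij => hinj (congrFun hij a)

variable [DecidableEq ι]

lemma card_embedding_isGeneralizedSet {k : ℕ} (hk : k < Fintype.card ι) :
    #{f : κ ↪ (ι → V) | IsGeneralizedSet (univ.map f) ∧
        #{a | IsCommonAttribute (univ.map f) a} = k} =
      #{g ∈ Fintype.piFinset fun _ : ι => constantColumns κ V ∪ injectiveColumns κ V |
        #{a | g a ∈ constantColumns κ V} = k} := by
  simp only [isGeneralizedSet_univ_map, isCommonAttribute_univ_map]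
  refine card_bij (fun f _ => Function.swap f) ?_ ?_ ?_
  · intro f hf
    simpa using hf
  · intro f _ f' _ h
    exact DFunLike.coe_injective (Function.swap_bijective.injective h)
  · intro g hg
    obtain ⟨hcolumns, hcard⟩ := mem_filter.mp hg
    have hcolumns := Fintype.mem_piFinset.mp hcolumns
    have hinj := injective_swap_of_card_constantColumns_lt hcolumns (hcard.trans_lt hk)
    exact ⟨⟨Function.swap g, hinj⟩, mem_filter.mpr ⟨mem_univ _, hcolumns, hcard⟩, rfl⟩

theorem sets_split_by_common_attributes_general {r k : ℕ} (hr : 2 ≤ r) (hk : k < Fintype.card ι) :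
    #{s ∈ powersetCard r (univ : Finset (ι → V)) |
        IsGeneralizedSet s ∧ #{a | IsCommonAttribute s a} = k} =
      (Fintype.card ι).choose k * Fintype.card V ^ k *
        (Fintype.card V).choose r ^ (Fintype.card ι - k) * r ! ^ (Fintype.card ι - k - 1) := by
  have : Nontrivial (Fin r) := Fin.nontrivial_iff_two_le.mpr hr
  refine Nat.eq_of_mul_eq_mul_right r.factorial_pos ?_
  calc _ = #{f : Fin r ↪ (ι → V) | IsGeneralizedSet (univ.map f) ∧
            #{a | IsCommonAttribute (univ.map f) a} = k} := by
        simpa only [Fintype.card_fin] using (card_filter_embedding_univ_map (κ := Fin r)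
          fun s : Finset (ι → V) => IsGeneralizedSet s ∧ #{a | IsCommonAttribute s a} = k).symm
    _ = (Fintype.card ι).choose k *
          (Fintype.card V ^ k * (r ! * (Fintype.card V).choose r) ^ (Fintype.card ι - k)) := by
        rw [card_embedding_isGeneralizedSet hk,
          card_filter_piFinset_union (disjoint_constantColumns_injectiveColumns _ _),
          card_constantColumns, card_injectiveColumns, Fintype.card_fin,
          Nat.descFactorial_eq_factorial_mul_choose]
    _ = _ := by
        obtain ⟨m, hm⟩ := Nat.exists_eq_add_of_lt hk
        rw [show Fintype.card ι - k = m + 1 by lia, Nat.add_sub_cancel]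
        ring

end GeneralizedSets

lemma isSet_iff {s : Finset Card} : IsSet s ↔ #s = 3 ∧ IsGeneralizedSet s :=
  Iff.rfl

lemma allCommonCount_eq (s : Finset Card) : allCommonCount s = #{a | IsCommonAttribute s a} :=
  congrArg card (filter_congr fun _ _ => Iff.rfl)

lemma card_filter_isSet {k : ℕ} (hk : k < 4) :
    #{s ∈ powersetCard 3 (univ : Finset Card) | IsSet s ∧ allCommonCount s = k} =
      Nat.choose 4 k * 3 ^ k * Nat.choose 3 3 ^ (4 - k) * 3 ! ^ (4 - k - 1) := by
  rw [← Fintype.card_fin 4] at hk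
  refine Eq.trans (congrArg card (filter_congr fun s hs => ?_))
    (sets_split_by_common_attributes_general (V := Fin 3) (r := 3) (by simp) hk)
  rw [isSet_iff, allCommonCount_eq, and_iff_right (mem_powersetCard_univ.mp hs)]

/-- The 1080 `Sets` split by their number of all-common attributes:
216 have none, 432 have one, 324 have two, and 108 have three. -/
theorem sets_split_by_common_attributes :
    (((Finset.univ : Finset Card).powersetCard 3).filter
        fun s => IsSet s ∧ allCommonCount s = 0).card = 216 ∧
    (((Finset.univ : Finset Card).powersetCard 3).filter
        fun s => IsSet s ∧ allCommonCount s = 1).card = 432 ∧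
    (((Finset.univ : Finset Card).powersetCard 3).filter
        fun s => IsSet s ∧ allCommonCount s = 2).card = 324 ∧
    (((Finset.univ : Finset Card).powersetCard 3).filter
        fun s => IsSet s ∧ allCommonCount s = 3).card = 108 :=
  ⟨card_filter_isSet (k := 0) (by simp), card_filter_isSet (k := 1) (by simp),
    card_filter_isSet (k := 2) (by simp), card_filter_isSet (k := 3) (by simp)⟩
end

section
/- The number of three-card hands of the SET deck whose symbol is (1, {0, 1, 2}) — i.e., exactly one attribute is common to all three cards, and the three pair-counts are 0, 1, and 2 — is exactly 7776. -/
/-!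
When its three pair-counts `p`, `q`, `r` are distinct, a hand has exactly one ordering `(x, y, z)`
in which they appear as the counts of `xy`, `yz`, `zx`, so hands may be counted as ordered triples.
An ordered triple assigns to each attribute a triple of values, of which 3 are constant and 6 have
each of the other four patterns of equality. Hence the count is the coefficient of
`A ^ t * P ^ p * Q ^ q * R ^ r * S ^ s` in `(3 * A + 6 * P + 6 * Q + 6 * R + 6 * S) ^ 4`, where `s`
is the number of attributes at which the three values are distinct.
-/

open Finset MvPolynomial
open scoped Nat

section FiberCount

variable {ι α β : Type*} [Fintype ι] [DecidableEq ι] [Fintype α] [DecidableEq β]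

theorem sum_X_comp_pow_eq_sum_monomial [Finite β] (f : α → β) :
    (∑ a, X (f a) : MvPolynomial β ℕ) ^ Fintype.card ι =
      ∑ g : ι → α, monomial (Finsupp.equivFunOnFinite.symm fun b => #{i | f (g i) = b}) 1 := by
  have := Fintype.ofFinite β
  calc (∑ a, X (f a) : MvPolynomial β ℕ) ^ Fintype.card ι
      = ∑ g : ι → α, ∏ i, X (f (g i)) := by
        rw [← Fintype.prod_sum fun (_ : ι) a => X (f a), prod_const, card_univ]
    _ = _ := by
        refine sum_congr rfl fun g _ => ?_
        rw [← prod_fiberwise' univ (fun i => f (g i)) X, monomial_eq, C_1, one_mul,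
          Finsupp.prod_fintype _ _ fun _ => pow_zero _]
        simp only [prod_const, Finsupp.equivFunOnFinite_symm_apply_apply]

variable [Fintype β]

theorem sum_X_comp_eq_sum_card_smul_X (f : α → β) :
    (∑ a, X (f a) : MvPolynomial β ℕ) = ∑ b, #{a | f a = b} • X b := by
  simp only [← sum_fiberwise' univ f X, sum_const]

theorem card_filter_card_fiber_eq (f : α → β) (m : β → ℕ) (hm : ∑ b, m b = Fintype.card ι) :
    #{g : ι → α | ∀ b, #{i | f (g i) = b} = m b} =
      Nat.multinomial univ m * ∏ b, #{a | f a = b} ^ m b := by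
  set d : β →₀ ℕ := Finsupp.equivFunOnFinite.symm m with hd
  have coeff_eq_card : coeff d ((∑ a, X (f a) : MvPolynomial β ℕ) ^ Fintype.card ι) =
      #{g : ι → α | ∀ b, #{i | f (g i) = b} = m b} := by
    simp only [sum_X_comp_pow_eq_sum_monomial, coeff_sum, coeff_monomial, hd,
      Finsupp.equivFunOnFinite.symm.injective.eq_iff, funext_iff, card_filter]
  have degree_d : d.sum (fun _ k => k) = Fintype.card ι := by
    rw [Finsupp.sum_fintype _ _ fun _ => rfl, ← hm]
    rfl
  rw [← coeff_eq_card, sum_X_comp_eq_sum_card_smul_X, coeff_linearCombination_X_pow_of_fintype,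
    if_pos degree_d, Finsupp.prod_fintype _ _ fun _ => pow_zero _,
    ← Finsupp.multinomial_of_support_subset (subset_univ _)]
  rfl

end FiberCount

theorem multiset_triple_eq_iff {α : Type*} {a b c a' b' c' : α} :
    ({a, b, c} : Multiset α) = {a', b', c'} ↔
      (a = a' ∧ b = b' ∧ c = c') ∨ (a = b' ∧ b = a' ∧ c = c') ∨ (a = c' ∧ b = b' ∧ c = a') ∨
      (a = b' ∧ b = c' ∧ c = a') ∨ (a = c' ∧ b = a' ∧ c = b') ∨ (a = a' ∧ b = c' ∧ c = b') := by
  have permutations_eq : [a', b', c'].permutations =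
      [[a', b', c'], [b', a', c'], [c', b', a'], [b', c', a'], [c', a', b'], [a', c', b']] := by
    cbv
  change (↑[a, b, c] : Multiset α) = ↑[a', b', c'] ↔ _
  rw [Multiset.coe_eq_coe, ← List.mem_permutations, permutations_eq]
  simp only [List.mem_cons, List.not_mem_nil, List.cons.injEq, and_true, or_false]

/-- The possible patterns of equality in a triple of values: all three equal, exactly one pair
equal (named by its two positions, in cyclic order), or all three distinct. -/
inductive EqPattern
  | all
  | fstSnd
  | sndThd
  | thdFst
  | none
  deriving DecidableEq

instance : Fintype EqPattern where
  elems := {.all, .fstSnd, .sndThd, .thdFst, .none}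
  complete e := by cases e <;> decide

@[to_additive]
theorem prod_univ_eqPattern {M : Type*} [CommMonoid M] (f : EqPattern → M) :
    ∏ e, f e = f .all * f .fstSnd * f .sndThd * f .thdFst * f .none := by
  change ∏ e ∈ {.all, .fstSnd, .sndThd, .thdFst, .none}, f e = _
  simp [mul_assoc]

/-- The function on patterns with values `t`, `p`, `q`, `r`, `s`, prescribing how many attributes
show each pattern. -/
def EqPattern.counts (t p q r s : ℕ) : EqPattern → ℕ
  | .all => t
  | .fstSnd => p
  | .sndThd => q
  | .thdFst => r
  | .none => s

section EqPattern

variable {κ : Type*} [DecidableEq κ]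

/-- The pattern of equality of a triple of values; for the values of three cards at an attribute,
it records to which of `tCount` and the three pair-counts the attribute contributes. -/
def eqPattern (v : κ × κ × κ) : EqPattern :=
  if v.1 = v.2.1 then if v.2.1 = v.2.2 then .all else .fstSnd
  else if v.2.1 = v.2.2 then .sndThd
  else if v.2.2 = v.1 then .thdFst
  else .none

theorem eqPattern_eq_all {a b c : κ} : eqPattern (a, b, c) = .all ↔ a = b ∧ b = c := by
  grind [eqPattern]

theorem eqPattern_eq_fstSnd {a b c : κ} : eqPattern (a, b, c) = .fstSnd ↔ a = b ∧ b ≠ c := by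
  grind [eqPattern]

theorem eqPattern_eq_sndThd {a b c : κ} : eqPattern (a, b, c) = .sndThd ↔ b = c ∧ c ≠ a := by
  grind [eqPattern]

theorem eqPattern_eq_thdFst {a b c : κ} : eqPattern (a, b, c) = .thdFst ↔ c = a ∧ a ≠ b := by
  grind [eqPattern]

end EqPattern

theorem card_filter_eqPattern_eq (e : EqPattern) :
    #{v : Fin 3 × Fin 3 × Fin 3 | eqPattern v = e} = if e = .all then 3 else 6 := by
  revert e
  decide

/-- The symbol of the ordered triple `(x, y, z)`, with the pair-counts of `xy`, `yz` and `zx` listed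
in this order instead of collected into a multiset. -/
def orderedSymbol (T : Card × Card × Card) : ℕ × ℕ × ℕ × ℕ :=
  (tCount T.1 T.2.1 T.2.2, pairCount T.1 T.2.1 T.2.2, pairCount T.2.1 T.2.2 T.1,
    pairCount T.2.2 T.1 T.2.1)

theorem orderedSymbol_eq_iff {x y z : Card} {t p q r : ℕ} :
    orderedSymbol (x, y, z) = (t, p, q, r) ↔
      tCount x y z = t ∧ pairCount x y z = p ∧ pairCount y z x = q ∧ pairCount z x y = r := by
  simp only [orderedSymbol, Prod.mk.injEq]

theorem card_filter_eqPattern_eq_counts_iff {x y z : Card} {t p q r s : ℕ}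
    (h : t + p + q + r + s = 4) :
    (∀ e, #{i | eqPattern (x i, y i, z i) = e} = EqPattern.counts t p q r s e) ↔
      orderedSymbol (x, y, z) = (t, p, q, r) := by
  have total : ∑ e, #{i | eqPattern (x i, y i, z i) = e} = 4 :=
    (card_eq_sum_card_fiberwise fun _ _ => mem_coe.2 (mem_univ _)).symm
  have tCount_eq : tCount x y z = #{i | eqPattern (x i, y i, z i) = .all} := by
    simp only [tCount, eqPattern_eq_all]
  have pairCount_xy : pairCount x y z = #{i | eqPattern (x i, y i, z i) = .fstSnd} := by
    simp only [pairCount, eqPattern_eq_fstSnd]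
  have pairCount_yz : pairCount y z x = #{i | eqPattern (x i, y i, z i) = .sndThd} := by
    simp only [pairCount, eqPattern_eq_sndThd]
  have pairCount_zx : pairCount z x y = #{i | eqPattern (x i, y i, z i) = .thdFst} := by
    simp only [pairCount, eqPattern_eq_thdFst]
  rw [sum_univ_eqPattern] at total
  rw [orderedSymbol_eq_iff, tCount_eq, pairCount_xy, pairCount_yz, pairCount_zx]
  constructor
  · exact fun count => ⟨count .all, count .fstSnd, count .sndThd, count .thdFst⟩
  · rintro ⟨ht, hp, hq, hr⟩ (_ | _ | _ | _ | _) <;>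
      simp only [EqPattern.counts] <;> omega

theorem card_filter_orderedSymbol_eq {t p q r s : ℕ} (h : t + p + q + r + s = 4) :
    #{T | orderedSymbol T = (t, p, q, r)} =
      4 ! / (t ! * p ! * q ! * r ! * s !) * (3 ^ t * 6 ^ (p + q + r + s)) := by
  calc #{T | orderedSymbol T = (t, p, q, r)}
      = #{g : Fin 4 → Fin 3 × Fin 3 × Fin 3 |
          ∀ e, #{i | eqPattern (g i) = e} = EqPattern.counts t p q r s e} := by
        refine card_bij' (fun T _ i => (T.1 i, T.2.1 i, T.2.2 i))
          (fun g _ => (fun i => (g i).1, fun i => (g i).2.1, fun i => (g i).2.2)) ?_ ?_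
          (fun _ _ => rfl) (fun _ _ => rfl)
        · simp [card_filter_eqPattern_eq_counts_iff h]
        · simp [← card_filter_eqPattern_eq_counts_iff h]
    _ = _ := by
        rw [card_filter_card_fiber_eq _ _ (by simpa [sum_univ_eqPattern, EqPattern.counts] using h)]
        simp [Nat.multinomial, EqPattern.counts, sum_univ_eqPattern, prod_univ_eqPattern,
          card_filter_eqPattern_eq, h, pow_add, mul_assoc]

theorem tCount_swap (x y z : Card) : tCount y x z = tCount x y z := by
  unfold tCount
  congr! 2 with i
  grind

theorem tCount_rotate (x y z : Card) : tCount y z x = tCount x y z := by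
  unfold tCount
  congr! 2 with i
  grind

theorem pairCount_swap (x y z : Card) : pairCount y x z = pairCount x y z := by
  unfold pairCount
  congr! 2 with i
  grind

theorem orderedSymbol_swap {x y z : Card} {t p q r : ℕ} :
    orderedSymbol (y, x, z) = (t, p, q, r) ↔ orderedSymbol (x, y, z) = (t, p, r, q) := by
  simp only [orderedSymbol_eq_iff, tCount_swap, pairCount_swap x y, pairCount_swap z x,
    pairCount_swap y z]
  tauto

theorem orderedSymbol_rotate {x y z : Card} {t p q r : ℕ} :
    orderedSymbol (y, z, x) = (t, p, q, r) ↔ orderedSymbol (x, y, z) = (t, r, p, q) := by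
  simp only [orderedSymbol_eq_iff, tCount_rotate]
  tauto

theorem pairCount_thd_eq_fst (x y : Card) : pairCount x y x = 0 := by
  simp +contextual [pairCount, filter_eq_empty_iff]

theorem pairCount_thd_eq_snd (x y : Card) : pairCount x y y = 0 := by
  simp [pairCount]

theorem pairwise_ne_of_orderedSymbol_eq {x y z : Card} {t p q r : ℕ} (hpq : p ≠ q) (hpr : p ≠ r)
    (hqr : q ≠ r) (h : orderedSymbol (x, y, z) = (t, p, q, r)) : x ≠ y ∧ x ≠ z ∧ y ≠ z := by
  obtain ⟨-, rfl, rfl, rfl⟩ := orderedSymbol_eq_iff.1 h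
  refine ⟨?_, ?_, ?_⟩ <;> rintro rfl <;>
    simp [pairCount_thd_eq_fst, pairCount_thd_eq_snd] at hpq hpr hqr

theorem symbol_eq_of_orderedSymbol_eq {x y z : Card} {t p q r : ℕ}
    (h : orderedSymbol (x, y, z) = (t, p, q, r)) : symbol x y z = (t, {p, q, r}) := by
  obtain ⟨rfl, rfl, rfl, rfl⟩ := orderedSymbol_eq_iff.1 h
  rfl

theorem exists_orderedSymbol_eq_of_symbol_eq {x y z : Card} {t p q r : ℕ}
    (h : symbol x y z = (t, {p, q, r})) :
    ∃ x' y' z', orderedSymbol (x', y', z') = (t, p, q, r) ∧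
      ({x', y', z'} : Finset Card) = {x, y, z} := by
  obtain ⟨ht, hpairs⟩ := Prod.mk.inj h
  have ordered : orderedSymbol (x, y, z) =
    (t, pairCount x y z, pairCount y z x, pairCount z x y) := orderedSymbol_eq_iff.2 (by simp [ht])
  rcases multiset_triple_eq_iff.1 hpairs with h | h | h | h | h | h <;>
    rw [h.1, h.2.1, h.2.2] at ordered
  · exact ⟨x, y, z, ordered, rfl⟩
  · exact ⟨z, y, x, orderedSymbol_swap.2 (orderedSymbol_rotate.2 ordered), by grind⟩
  · exact ⟨x, z, y, orderedSymbol_rotate.2 (orderedSymbol_swap.2 ordered), by grind⟩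
  · exact ⟨z, x, y, orderedSymbol_rotate.2 (orderedSymbol_rotate.2 ordered), by grind⟩
  · exact ⟨y, z, x, orderedSymbol_rotate.2 ordered, by grind⟩
  · exact ⟨y, x, z, orderedSymbol_swap.2 ordered, by grind⟩

theorem triple_eq_of_orderedSymbol_eq {x y z x' y' z' : Card} {t p q r : ℕ} (hpq : p ≠ q)
    (hpr : p ≠ r) (hqr : q ≠ r) (h : orderedSymbol (x, y, z) = (t, p, q, r))
    (h' : orderedSymbol (x', y', z') = (t, p, q, r))
    (hand_eq : ({x, y, z} : Finset Card) = {x', y', z'}) : (x, y, z) = (x', y', z') := by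
  obtain ⟨hxy, hxz, hyz⟩ := pairwise_ne_of_orderedSymbol_eq hpq hpr hqr h
  obtain ⟨hxy', hxz', hyz'⟩ := pairwise_ne_of_orderedSymbol_eq hpq hpr hqr h'
  have vals_eq : ({x, y, z} : Multiset Card) = {x', y', z'} := by
    simpa [hxy, hxz, hyz, hxy', hxz', hyz'] using congrArg Finset.val hand_eq
  rcases multiset_triple_eq_iff.1 vals_eq with ⟨rfl, rfl, rfl⟩ | ⟨rfl, rfl, rfl⟩ |
    ⟨rfl, rfl, rfl⟩ | ⟨rfl, rfl, rfl⟩ | ⟨rfl, rfl, rfl⟩ | ⟨rfl, rfl, rfl⟩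
  · rfl
  -- A nontrivial reordering of the cards permutes the pair-counts, which are distinct.
  all_goals grind [orderedSymbol_eq_iff, pairCount_swap]

theorem filter_symbol_eq_image_orderedSymbol {t p q r : ℕ} (hpq : p ≠ q) (hpr : p ≠ r)
    (hqr : q ≠ r) :
    {hand ∈ (univ : Finset Card).powersetCard 3 | ∃ x y z : Card, x ≠ y ∧ x ≠ z ∧ y ≠ z ∧
        hand = {x, y, z} ∧ symbol x y z = (t, {p, q, r})} =
      image (fun T : Card × Card × Card => {T.1, T.2.1, T.2.2})
        {T | orderedSymbol T = (t, p, q, r)} := by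
  ext hand
  simp only [mem_filter, mem_powersetCard, mem_image, mem_univ, true_and, Prod.exists]
  constructor
  · rintro ⟨-, x, y, z, -, -, -, rfl, hsymbol⟩
    exact exists_orderedSymbol_eq_of_symbol_eq hsymbol
  · rintro ⟨x, y, z, ordered, rfl⟩
    obtain ⟨hxy, hxz, hyz⟩ := pairwise_ne_of_orderedSymbol_eq hpq hpr hqr ordered
    exact ⟨⟨subset_univ _, card_triple_eq_three_iff.2 ⟨hxy, hxz, hyz⟩⟩,
      x, y, z, hxy, hxz, hyz, rfl, symbol_eq_of_orderedSymbol_eq ordered⟩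

theorem card_hands_symbol_1_012_general {t p q r s : ℕ} (hpq : p ≠ q) (hpr : p ≠ r) (hqr : q ≠ r)
    (h : t + p + q + r + s = 4) :
    #{hand ∈ (univ : Finset Card).powersetCard 3 | ∃ x y z : Card, x ≠ y ∧ x ≠ z ∧ y ≠ z ∧
        hand = {x, y, z} ∧ symbol x y z = (t, {p, q, r})} =
      4 ! / (t ! * p ! * q ! * r ! * s !) * (3 ^ t * 6 ^ (p + q + r + s)) := by
  rw [filter_symbol_eq_image_orderedSymbol hpq hpr hqr, card_image_of_injOn,
    card_filter_orderedSymbol_eq h]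
  simp only [Set.InjOn, mem_coe, mem_filter_univ, Prod.forall]
  exact fun _ _ _ ordered _ _ _ ordered' =>
    triple_eq_of_orderedSymbol_eq hpq hpr hqr ordered ordered'

/-- There are exactly 7776 three-card hands with symbol `(1, {0, 1, 2})`. -/
theorem card_hands_symbol_1_012 :
    (((Finset.univ : Finset Card).powersetCard 3).filter
      fun s => ∃ x y z : Card, x ≠ y ∧ x ≠ z ∧ y ≠ z ∧ s = {x, y, z} ∧
        symbol x y z = (1, ({0, 1, 2} : Multiset ℕ))).card = 7776 := by
  exact card_hands_symbol_1_012_general (t := 1) (s := 0)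
    (by decide) (by decide) (by decide) (by decide)
end

section
/- The number of 3-element subsets of the SET deck that are Stuns is exactly 16848. -/
/-- A finite set of cards is a `Stun` if it has three cards and, in each attribute,
the three cards take exactly two distinct values. -/
def IsStun (s : Finset Card) : Prop :=
  s.card = 3 ∧ ∀ a : Fin 4, (s.image fun x => x a).card = 2

instance : DecidablePred IsStun := fun s => by unfold IsStun; infer_instance

/-!
Count ordered Stuns, of which each Stun gives `3! = 6`. In each attribute exactly one of the three
cards is the odd one out, so an ordered triple is described by choosing, for each attribute, the
odd card and an ordered pair of distinct values (the common one and the odd one). Two of the three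
cards coincide exactly when the remaining card is the odd one in every attribute. With `n`
attributes of `q` values there are therefore `(3 ^ n - 3) * (q * (q - 1)) ^ n` ordered Stuns.
-/

open Finset Function

section Orderings

variable {κ β : Type*} [Fintype κ] [DecidableEq κ] [Fintype β] [DecidableEq β]

theorem card_filter_injective_image_eq {s : Finset β} (hs : #s = Fintype.card κ) :
    #{f : κ → β | Injective f ∧ univ.image f = s} = (Fintype.card κ).factorial := by
  have e : κ ≃ s := Fintype.equivOfCardEq (by rw [Fintype.card_coe, hs])
  rw [← Fintype.card_equiv e, ← card_univ]
  symm
  refine card_bij (fun g _ i => (g i : β)) (fun g _ => ?_) (fun g _ g' _ h => ?_) fun f hf => ?_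
  · have himage : univ.image (fun i => (g i : β)) = s := by
      ext b
      simpa using ⟨fun ⟨i, hi⟩ => hi ▸ (g i).2, fun hb => ⟨g.symm ⟨b, hb⟩, by simp⟩⟩
    exact mem_filter.2 ⟨mem_univ _, Subtype.val_injective.comp g.injective, himage⟩
  · exact Equiv.ext fun i => Subtype.ext (congrFun h i)
  · obtain ⟨-, hinj, rfl⟩ := mem_filter.1 hf
    have hbij : Bijective fun i => (⟨f i, mem_image_of_mem f (mem_univ i)⟩ : univ.image f) := by
      refine ⟨fun i j h => hinj (congrArg Subtype.val h), fun ⟨b, hb⟩ => ?_⟩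
      obtain ⟨i, -, rfl⟩ := mem_image.1 hb
      exact ⟨i, rfl⟩
    exact ⟨Equiv.ofBijective _ hbij, mem_univ _, rfl⟩

theorem card_filter_injective_and_image (P : Finset β → Prop) [DecidablePred P] :
    #{f : κ → β | Injective f ∧ P (univ.image f)} =
      (Fintype.card κ).factorial * #{s ∈ powersetCard (Fintype.card κ) univ | P s} := by
  set orderings : Finset (κ → β) := {f | Injective f ∧ P (univ.image f)} with horderings
  set sets : Finset (Finset β) := {s ∈ powersetCard (Fintype.card κ) univ | P s}
  have hmaps : ∀ f ∈ orderings, univ.image f ∈ sets := by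
    intro f hf
    obtain ⟨-, hinj, hP⟩ := mem_filter.1 hf
    have hcard : #(univ.image f) = Fintype.card κ := card_image_of_injective _ hinj
    exact mem_filter.2 ⟨mem_powersetCard.2 ⟨subset_univ _, hcard⟩, hP⟩
  have hfiber : ∀ s ∈ sets,
      #{f ∈ orderings | univ.image f = s} = (Fintype.card κ).factorial := by
    intro s hs
    obtain ⟨hs, hP⟩ := mem_filter.1 hs
    rw [← card_filter_injective_image_eq (mem_powersetCard.1 hs).2, horderings, filter_filter]
    congr 1 with f
    simp only [mem_filter, mem_univ, true_and]
    exact ⟨fun h => ⟨h.1.1, h.2⟩, fun h => ⟨⟨h.1, h.2 ▸ hP⟩, h.2⟩⟩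
  rw [card_eq_sum_card_fiberwise hmaps, sum_const_nat hfiber, mul_comm]

end Orderings

theorem card_compl_image_const (ι κ : Type*) [Fintype ι] [DecidableEq ι] [Nonempty ι]
    [Fintype κ] [DecidableEq κ] :
    #(univ.image (const ι : κ → ι → κ))ᶜ =
      Fintype.card κ ^ Fintype.card ι - Fintype.card κ := by
  rw [card_compl, card_image_of_injective _ const_injective, card_univ, Fintype.card_fun]

section OddOneOut

variable {ι α : Type*}

/-- The values of three cards in one attribute when the `i`-th card is the odd one out: `p.1` is
the value shared by the other two cards and `p.2` that of card `i`. -/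
def oddTriple (i : Fin 3) (p : α × α) : Fin 3 → α :=
  update (const _ p.1) i p.2

theorem oddTriple_apply (i : Fin 3) (p : α × α) (j : Fin 3) :
    oddTriple i p j = if j = i then p.2 else p.1 := by
  simp [oddTriple, update_apply]

theorem oddTriple_apply_eq_iff {i : Fin 3} {p : α × α} (hp : p.1 ≠ p.2) {j k : Fin 3} :
    oddTriple i p j = oddTriple i p k ↔ (j = i ↔ k = i) := by
  grind [oddTriple_apply]

theorem oddTriple_inj {i j : Fin 3} {p q : α × α} (hp : p.1 ≠ p.2) (hq : q.1 ≠ q.2)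
    (h : oddTriple i p = oddTriple j q) : i = j ∧ p = q := by
  obtain rfl : i = j := by
    have hij : ∀ k l : Fin 3, (k = i ↔ l = i) ↔ (k = j ↔ l = j) := fun k l => by
      rw [← oddTriple_apply_eq_iff hp, h, oddTriple_apply_eq_iff hq]
    clear h
    revert i j
    decide
  obtain ⟨k, hk⟩ := exists_ne i
  refine ⟨rfl, Prod.ext ?_ ?_⟩
  · simpa [oddTriple_apply, hk] using congrFun h k
  · simpa [oddTriple_apply] using congrFun h i

theorem image_oddTriple [DecidableEq α] (i : Fin 3) (p : α × α) :
    univ.image (oddTriple i p) = {p.1, p.2} := by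
  obtain ⟨k, hki⟩ := exists_ne i
  have hi : oddTriple i p i = p.2 := by simp [oddTriple_apply]
  have hk : oddTriple i p k = p.1 := by simp [oddTriple_apply, hki]
  refine Subset.antisymm (fun b hb => ?_) ?_
  · obtain ⟨j, -, rfl⟩ := mem_image.1 hb
    grind [oddTriple_apply]
  · rw [insert_subset_iff, singleton_subset_iff, ← hi, ← hk]
    exact ⟨mem_image_of_mem _ (mem_univ _), mem_image_of_mem _ (mem_univ _)⟩

theorem exists_forall_eq_or_eq_or_eq {i j : Fin 3} (hij : i ≠ j) :
    ∃ k, ∀ l, l = i ∨ l = j ∨ l = k := by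
  decide +revert

theorem card_image_eq_two_iff_exists_oddTriple [DecidableEq α] {f : Fin 3 → α} :
    #(univ.image f) = 2 ↔ ∃ i, ∃ p : α × α, p.1 ≠ p.2 ∧ f = oddTriple i p := by
  constructor
  · intro h
    obtain ⟨x, y, hxy, himage⟩ := card_eq_two.1 h
    have hf k : f k = x ∨ f k = y := by
      simpa [himage] using mem_image_of_mem f (mem_univ k)
    have hattained : ∀ b ∈ ({x, y} : Finset α), ∃ i, f i = b := by simp [← himage]
    obtain ⟨i, rfl⟩ := hattained x (by simp)
    obtain ⟨j, rfl⟩ := hattained y (by simp)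
    obtain ⟨k, hk⟩ := exists_forall_eq_or_eq_or_eq (ne_of_apply_ne f hxy)
    rcases hf k with hki | hkj
    · exact ⟨j, (f i, f j), hxy, funext fun l => by grind [oddTriple_apply, hk l]⟩
    · exact ⟨i, (f j, f i), hxy.symm, funext fun l => by grind [oddTriple_apply, hk l]⟩
  · rintro ⟨i, p, hp, rfl⟩
    rw [image_oddTriple, card_pair hp]

theorem injective_oddTriple_iff {c : ι → Fin 3} {d : ι → α × α} (hd : ∀ a, (d a).1 ≠ (d a).2) :
    Injective (fun j a => oddTriple (c a) (d a) j) ↔ c ∉ Set.range (const ι) := by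
  simp only [Injective, funext_iff, oddTriple_apply_eq_iff (hd _)]
  constructor
  · rintro hinj ⟨i, rfl⟩
    have hothers : ∀ i : Fin 3, ∃ j k, j ≠ k ∧ j ≠ i ∧ k ≠ i := by decide
    obtain ⟨j, k, hjk, hj, hk⟩ := hothers i
    exact hjk (hinj fun _ => by simp [hj, hk])
  · intro hc j k hagree
    by_contra hjk
    obtain ⟨i, hi⟩ := exists_forall_eq_or_eq_or_eq hjk
    have hci a : c a = i := by grind [hi (c a)]
    exact hc ⟨i, funext fun a => (hci a).symm⟩

end OddOneOut

/-- The sets of three cards that take exactly two distinct values in each attribute, where the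
attributes are indexed by `ι` and each takes values in `α`. -/
def stuns (ι α : Type*) [Fintype ι] [DecidableEq ι] [Fintype α] [DecidableEq α] :
    Finset (Finset (ι → α)) :=
  {s ∈ powersetCard 3 univ | ∀ a, #(s.image fun x => x a) = 2}

/-- The triples of distinct cards whose underlying set is a member of `stuns ι α`: the stuns
together with an ordering of their cards. -/
def orderedStuns (ι α : Type*) [Fintype ι] [DecidableEq ι] [Fintype α] [DecidableEq α] :
    Finset (Fin 3 → ι → α) :=
  {v | Injective v ∧ ∀ a, #(univ.image fun j => v j a) = 2}

section Stuns

variable (ι α : Type*) [Fintype ι] [DecidableEq ι] [Fintype α] [DecidableEq α]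

theorem card_orderedStuns_eq_six_mul : #(orderedStuns ι α) = 6 * #(stuns ι α) := by
  simpa [orderedStuns, stuns, image_image, comp_def, Nat.factorial] using
    card_filter_injective_and_image (κ := Fin 3)
      fun s : Finset (ι → α) => ∀ a, #(s.image fun x => x a) = 2

theorem card_orderedStuns_eq_card_product : #(orderedStuns ι α) =
    #((univ.image (const ι : Fin 3 → ι → Fin 3))ᶜ ×ˢ
      Fintype.piFinset fun _ : ι => (univ : Finset α).offDiag) := by
  symm
  refine card_bij (fun w _ j a => oddTriple (w.1 a) (w.2 a) j) ?_ ?_ ?_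
  · rintro ⟨c, d⟩ hw
    simp only [mem_product, mem_compl, mem_image_univ_iff_mem_range, Fintype.mem_piFinset,
      mem_offDiag, mem_univ, true_and] at hw
    obtain ⟨hc, hd⟩ := hw
    simp only [orderedStuns, mem_filter, mem_univ, true_and]
    exact ⟨(injective_oddTriple_iff hd).2 hc, fun a =>
      card_image_eq_two_iff_exists_oddTriple.2 ⟨c a, d a, hd a, rfl⟩⟩
  · rintro ⟨c, d⟩ hw ⟨c', d'⟩ hw' h
    simp only [mem_product, Fintype.mem_piFinset, mem_offDiag, mem_univ, true_and] at hw hw'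
    have hcd a : c a = c' a ∧ d a = d' a :=
      oddTriple_inj (hw.2 a) (hw'.2 a) (funext fun j => congrFun₂ h j a)
    exact Prod.ext (funext fun a => (hcd a).1) (funext fun a => (hcd a).2)
  · intro v hv
    obtain ⟨-, hinj, hv⟩ := mem_filter.1 hv
    choose c d hd hcd using fun a => card_image_eq_two_iff_exists_oddTriple.1 (hv a)
    obtain rfl : v = fun j a => oddTriple (c a) (d a) j :=
      funext₂ fun j a => congrFun (hcd a) j
    refine ⟨(c, d), ?_, rfl⟩
    simpa [hd] using (injective_oddTriple_iff hd).1 hinj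

theorem card_orderedStuns [Nonempty ι] : #(orderedStuns ι α) =
    (3 ^ Fintype.card ι - 3) * (Fintype.card α * (Fintype.card α - 1)) ^ Fintype.card ι := by
  rw [card_orderedStuns_eq_card_product, card_product, card_compl_image_const,
    Fintype.card_piFinset, prod_const, offDiag_card, card_univ, card_univ, Fintype.card_fin,
    Nat.mul_sub_one]

end Stuns

theorem card_stuns_eq_16848_general (ι α : Type*) [Fintype ι] [DecidableEq ι] [Nonempty ι]
    [Fintype α] [DecidableEq α] : 6 * #(stuns ι α) =
      (3 ^ Fintype.card ι - 3) * (Fintype.card α * (Fintype.card α - 1)) ^ Fintype.card ι := by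
  rw [← card_orderedStuns_eq_six_mul, card_orderedStuns]

theorem filter_isStun_eq_stuns :
    ((univ : Finset Card).powersetCard 3).filter IsStun = stuns (Fin 4) (Fin 3) := by
  ext s
  simp [stuns, IsStun]

/-- There are exactly 16848 three-card `Stuns` in the SET deck. -/
theorem card_stuns_eq_16848 :
    (((Finset.univ : Finset Card).powersetCard 3).filter IsStun).card = 16848 := by
  have h := card_stuns_eq_16848_general (Fin 4) (Fin 3)
  grind [filter_isStun_eq_stuns, Fintype.card_fin]
end

section
/- For every card c of the SET deck, the number of distinct induced deck maps that fix c is exactly 384 = 4!·2⁴. (These are exactly the self-isomorphisms of the 80-card hand consisting of the whole deck with the single card c removed.) -/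
/-!
A pair `(ψ, θ)` can be recovered from its deck map: changing coordinate `i` of the input changes
exactly coordinate `ψ i` of the output, and constant inputs then reveal `θ`. So it suffices to count
the pairs whose map fixes `c`, that is, those with `θ i (c i) = c (ψ i)` for all `i`. Every `ψ` is
allowed, and if there are `m` values, then for each `i` exactly `(m - 1)!` permutations of them send
`c i` to `c (ψ i)`. Replacing `c` by another card `d` on the right-hand sides changes nothing.
-/

open Equiv Function
open scoped Nat

theorem natCard_perm_apply_eq {α : Type*} [Finite α] (a b : α) :
    Nat.card {σ : Perm α // σ a = b} = (Nat.card α - 1)! := by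
  classical
  have apply_eq_iff (σ : Perm α) : σ a = b ↔ ∀ x, ¬x ≠ a → (swap a b * σ) x = x := by
    simp only [ne_eq, not_not, forall_eq, Perm.mul_apply, swap_apply_eq_iff, swap_apply_left]
  calc Nat.card {σ : Perm α // σ a = b}
    _ = Nat.card {σ : Perm α // ∀ x, ¬x ≠ a → σ x = x} :=
      Nat.card_congr ((Equiv.mulLeft (swap a b)).subtypeEquiv apply_eq_iff)
    _ = Nat.card (Perm {x // x ≠ a}) :=
      Nat.card_congr (Perm.subtypeEquivSubtypePerm (· ≠ a)).symm
    _ = (Nat.card α - 1)! := by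
      have := Fintype.ofFinite α
      rw [Nat.card_perm, Nat.card_eq_fintype_card, Fintype.card_subtype_compl,
        Fintype.card_subtype_eq, Nat.card_eq_fintype_card]

theorem natCard_forall_perm_apply_eq {ι α : Type*} [Finite ι] [Finite α] (c d : ι → α) :
    Nat.card {θ : ι → Perm α // ∀ i, θ i (c i) = d i} = (Nat.card α - 1)! ^ Nat.card ι := by
  have := Fintype.ofFinite ι
  calc Nat.card {θ : ι → Perm α // ∀ i, θ i (c i) = d i}
    _ = Nat.card (∀ i, {σ : Perm α // σ (c i) = d i}) :=
      Nat.card_congr (subtypePiEquivPi (p := fun i (σ : Perm α) ↦ σ (c i) = d i))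
    _ = ∏ i, Nat.card {σ : Perm α // σ (c i) = d i} := Nat.card_pi
    _ = (Nat.card α - 1)! ^ Nat.card ι := by
      simp only [natCard_perm_apply_eq, Finset.prod_const, Finset.card_univ,
        Nat.card_eq_fintype_card]

section Relabel

variable {ι κ α β : Type*}

/-- The deck map for arbitrary types of attributes and values: `relabel ψ θ` sends `x` to the `y`
with `y (ψ i) = θ i (x i)` for all `i`. It is composed so that `deckMap` is definitionally an
instance of it. -/
def relabel (ψ : ι ≃ κ) (θ : ι → α ≃ β) : (ι → α) ≃ (κ → β) :=
  (piCongrRight θ).trans (ψ.arrowCongr (Equiv.refl β))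

@[simp]
theorem relabel_apply_apply (ψ : ι ≃ κ) (θ : ι → α ≃ β) (x : ι → α) (i : ι) :
    relabel ψ θ x (ψ i) = θ i (x i) := by
  simp [relabel]

theorem relabel_apply_eq_iff {ψ : ι ≃ κ} {θ : ι → α ≃ β} {c : ι → α} {d : κ → β} :
    relabel ψ θ c = d ↔ ∀ i, θ i (c i) = d (ψ i) := by
  simp only [funext_iff, ψ.surjective.forall, relabel_apply_apply]

theorem relabel_injective2 [Nontrivial α] :
    Injective2 (relabel : (ι ≃ κ) → (ι → α ≃ β) → (ι → α) ≃ (κ → β)) := by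
  classical
  intro ψ ψ' θ θ' h
  have apply_eq (x : ι → α) {i j : ι} (hij : ψ i = ψ' j) : θ i (x i) = θ' j (x j) := by
    rw [← relabel_apply_apply ψ, ← relabel_apply_apply ψ', h, hij]
  obtain rfl : ψ = ψ' := by
    ext i
    obtain ⟨j, hj⟩ := ψ'.surjective (ψ i)
    suffices j = i by rw [← hj, this]
    by_contra hji
    obtain ⟨u, v, huv⟩ := exists_pair_ne α
    refine huv ((θ i).injective ?_)
    calc θ i u = θ' j u := apply_eq (fun _ ↦ u) hj.symm
      _ = θ i v := by simpa [hji] using (apply_eq (update (fun _ ↦ u) i v) hj.symm).symm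
  refine ⟨rfl, ?_⟩
  ext i v
  exact apply_eq (fun _ ↦ v) rfl

theorem natCard_relabel_apply_eq [Finite ι] [Finite α] (c d : ι → α) :
    Nat.card {p : Perm ι × (ι → Perm α) // relabel p.1 p.2 c = d} =
      (Nat.card ι)! * (Nat.card α - 1)! ^ Nat.card ι := by
  have := Fintype.ofFinite (Perm ι)
  calc Nat.card {p : Perm ι × (ι → Perm α) // relabel p.1 p.2 c = d}
    _ = Nat.card (Σ ψ : Perm ι, {θ : ι → Perm α // relabel ψ θ c = d}) :=
      Nat.card_congr (subtypeProdEquivSigmaSubtype fun ψ θ ↦ relabel ψ θ c = d)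
    _ = ∑ ψ : Perm ι, Nat.card {θ : ι → Perm α // ∀ i, θ i (c i) = d (ψ i)} := by
      simp only [Nat.card_sigma, relabel_apply_eq_iff]
    _ = ∑ _ψ : Perm ι, (Nat.card α - 1)! ^ Nat.card ι :=
      Finset.sum_congr rfl fun ψ _ ↦ natCard_forall_perm_apply_eq c (d ∘ ψ)
    _ = (Nat.card ι)! * (Nat.card α - 1)! ^ Nat.card ι := by
      rw [Finset.sum_const, Finset.card_univ, ← Nat.card_eq_fintype_card, Nat.card_perm,
        smul_eq_mul]

theorem card_deckMaps_fixing_card_general [Finite ι] [Finite α] [Nontrivial α] (c d : ι → α) :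
    Nat.card {f : (ι → α) → ι → α //
      (∃ (ψ : Perm ι) (θ : ι → Perm α), f = relabel ψ θ) ∧ f c = d} =
        (Nat.card ι)! * (Nat.card α - 1)! ^ Nat.card ι := by
  rw [← natCard_relabel_apply_eq c d]
  refine (Nat.card_eq_of_bijective
    (fun p ↦ ⟨relabel p.1.1 p.1.2, ⟨p.1.1, p.1.2, rfl⟩, p.2⟩) ⟨fun p q h ↦ ?_, ?_⟩).symm
  · have relabel_eq : relabel p.1.1 p.1.2 = relabel q.1.1 q.1.2 :=
      DFunLike.coe_injective (congrArg Subtype.val h)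
    exact Subtype.ext (relabel_injective2.uncurry relabel_eq)
  · rintro ⟨_, ⟨ψ, θ, rfl⟩, hcd⟩
    exact ⟨⟨(ψ, θ), hcd⟩, rfl⟩

end Relabel

theorem deckMap_eq_relabel (ψ : Perm (Fin 4)) (θ : Fin 4 → Perm (Fin 3)) :
    deckMap ψ θ = relabel ψ θ :=
  rfl

/-- For every card `c`, there are exactly `384 = 4! · 2⁴` distinct induced deck maps
fixing `c` (the self-isomorphisms of the 80-card hand omitting `c`). -/
theorem card_deckMaps_fixing_card (c : Card) :
    Nat.card {f : Card → Card //
      (∃ (ψ : Equiv.Perm (Fin 4)) (θ : Fin 4 → Equiv.Perm (Fin 3)),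
        f = deckMap ψ θ) ∧ f c = c} = 384 := by
  simp only [deckMap_eq_relabel, card_deckMaps_fixing_card_general, Nat.card_fin]
  rfl
end
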